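/- Let $R_1$ be a commutative local ring with unity having five distinct units $u_1, \ldots, u_5$ and two distinct non-zero elements $a, b$ of its maximal ideal, and let $F$ be a field with $|F| \geq 3$, with distinct units $v_1, v_2$. Then $\Gamma'(R_1 \times F)$ contains $K_{5,5}$ as a subgraph, with parts $\{(u_1,0), (u_2,0), (u_3,0), (u_4,0), (u_5,0)\}$ and $\{(0,v_1), (0,v_2), (a,v_1), (a,v_2), (b,v_1)\}$. -/

import Mathlib

/-- Adjacency in the cozero-divisor graph `Γ'(R)`: both elements are vertices
(non-zero non-units) and neither lies in the principal ideal generated by the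
other. -/
def cozeroAdj {R : Type*} [CommRing R] (x y : R) : Prop :=
  (x ≠ 0 ∧ ¬ IsUnit x) ∧ (y ≠ 0 ∧ ¬ IsUnit y) ∧
    x ∉ Ideal.span {y} ∧ y ∉ Ideal.span {x}

section CozeroAdj

variable {R S : Type*} [CommRing R] [CommRing S]

-- The vertex conditions are automatic: everything divides `0`, and a unit divides everything.
theorem cozeroAdj_iff_not_dvd {x y : R} : cozeroAdj x y ↔ ¬ x ∣ y ∧ ¬ y ∣ x := by
  simp only [cozeroAdj, Ideal.mem_span_singleton]
  constructor
  · rintro ⟨-, -, hyx, hxy⟩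
    exact ⟨hxy, hyx⟩
  · rintro ⟨hxy, hyx⟩
    exact ⟨⟨fun hx => hyx (hx ▸ dvd_zero y), fun hx => hxy hx.dvd⟩,
      ⟨fun hy => hxy (hy ▸ dvd_zero x), fun hy => hyx hy.dvd⟩, hyx, hxy⟩

theorem cozeroAdj.ne {x y : R} (h : cozeroAdj x y) : x ≠ y := fun hxy =>
  (cozeroAdj_iff_not_dvd.mp h).1 hxy.dvd

theorem cozeroAdj_prod_of_not_dvd {x y : R × S} (hfst : ¬ y.1 ∣ x.1) (hsnd : ¬ x.2 ∣ y.2) :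
    cozeroAdj x y :=
  cozeroAdj_iff_not_dvd.mpr
    ⟨fun h => hsnd (prod_dvd_iff.mp h).2, fun h => hfst (prod_dvd_iff.mp h).1⟩

theorem cozeroAdj_prod_of_isUnit_fst_of_snd_eq_zero {x y : R × S} (hx₁ : IsUnit x.1)
    (hx₂ : x.2 = 0) (hy₁ : ¬ IsUnit y.1) (hy₂ : y.2 ≠ 0) : cozeroAdj x y :=
  cozeroAdj_prod_of_not_dvd (fun h => hy₁ (isUnit_of_dvd_unit h hx₁))
    (by rwa [hx₂, zero_dvd_iff])

end CozeroAdj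

theorem stmt7_general {R S : Type*} [CommRing R] [CommRing S] {u₁ u₂ u₃ u₄ u₅ : R}
    (hu₁ : IsUnit u₁) (hu₂ : IsUnit u₂) (hu₃ : IsUnit u₃) (hu₄ : IsUnit u₄) (hu₅ : IsUnit u₅)
    (hu : [u₁, u₂, u₃, u₄, u₅].Pairwise (· ≠ ·))
    {a b : R} (ha : ¬ IsUnit a) (hb : ¬ IsUnit b) (ha0 : a ≠ 0) (hb0 : b ≠ 0) (hab : a ≠ b)
    {v₁ v₂ : S} (hv₁ : v₁ ≠ 0) (hv₂ : v₂ ≠ 0) (hv : v₁ ≠ v₂)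
    {A B : Fin 5 → R × S}
    (hA : A = ![(u₁, 0), (u₂, 0), (u₃, 0), (u₄, 0), (u₅, 0)])
    (hB : B = ![(0, v₁), (0, v₂), (a, v₁), (a, v₂), (b, v₁)]) :
    Function.Injective A ∧ Function.Injective B ∧ (∀ i j, A i ≠ B j) ∧
      ∀ i j, cozeroAdj (A i) (B j) := by
  have h_zero : ¬ IsUnit (0 : R) := fun h => ha (isUnit_of_dvd_unit (dvd_zero a) h)
  have hA_coords : ∀ i, IsUnit (A i).1 ∧ (A i).2 = 0 := by
    simp [hA, Fin.forall_fin_succ, hu₁, hu₂, hu₃, hu₄, hu₅]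
  have hB_coords : ∀ j, ¬ IsUnit (B j).1 ∧ (B j).2 ≠ 0 := by
    simp only [hB, Fin.forall_fin_succ]
    simp [h_zero, ha, hb, hv₁, hv₂]
  have hadj : ∀ i j, cozeroAdj (A i) (B j) := fun i j =>
    cozeroAdj_prod_of_isUnit_fst_of_snd_eq_zero (hA_coords i).1 (hA_coords i).2
      (hB_coords j).1 (hB_coords j).2
  have hA_inj : Function.Injective A := List.nodup_ofFn.mp (by simpa [hA] using hu)
  have hB_inj : Function.Injective B :=
    List.nodup_ofFn.mp (by simp [hB, ha0.symm, hb0.symm, hab, hv])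
  exact ⟨hA_inj, hB_inj, fun i j => (hadj i j).ne, hadj⟩

/-- Let `R₁` be a commutative local ring with five distinct units
`u₁, …, u₅` and two distinct non-zero elements `a, b` of its maximal ideal,
and let `F` be a field with `|F| ≥ 3` and distinct units `v₁, v₂`.  Then
`Γ'(R₁ × F)` contains `K_{5,5}` as a subgraph with the indicated parts. -/
theorem stmt7 (R₁ F : Type*) [CommRing R₁] [IsLocalRing R₁] [Field F]
    (u₁ u₂ u₃ u₄ u₅ : R₁)
    (hu₁ : IsUnit u₁) (hu₂ : IsUnit u₂) (hu₃ : IsUnit u₃) (hu₄ : IsUnit u₄)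
    (hu₅ : IsUnit u₅) (hu : ([u₁, u₂, u₃, u₄, u₅] : List R₁).Pairwise (· ≠ ·))
    (a b : R₁) (ha : a ∈ IsLocalRing.maximalIdeal R₁)
    (hb : b ∈ IsLocalRing.maximalIdeal R₁) (ha0 : a ≠ 0) (hb0 : b ≠ 0) (hab : a ≠ b)
    (hF : 3 ≤ Cardinal.mk F)
    (v₁ v₂ : F) (hv₁ : IsUnit v₁) (hv₂ : IsUnit v₂) (hv : v₁ ≠ v₂)
    (A B : Fin 5 → R₁ × F)
    (hA : A = ![(u₁, 0), (u₂, 0), (u₃, 0), (u₄, 0), (u₅, 0)])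
    (hB : B = ![(0, v₁), (0, v₂), (a, v₁), (a, v₂), (b, v₁)]) :
    Function.Injective A ∧ Function.Injective B ∧ (∀ i j, A i ≠ B j) ∧
      ∀ i j, cozeroAdj (A i) (B j) :=
  stmt7_general hu₁ hu₂ hu₃ hu₄ hu₅ hu ha hb ha0 hb0 hab hv₁.ne_zero hv₂.ne_zero hv hA hB
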